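/- arXiv:1807.04988 — 2 statements merged into one kernel-verified Lean document; each statement's English description precedes it below -/
import Mathlib

section
/- Let $z_{\max} > 0$ and $\alpha_2 > 0$. Let $(g_n)_{n \ge 0}$ be a sequence of functions $g_n : (0, z_{\max}] \to (0,1]$ such that each $g_n$ is monotone increasing and differentiable on $(0,z_{\max}]$, such that for every $z \in (0,z_{\max}]$ the sequence $(g_n(z))_{n\ge 0}$ converges, and such that for every $n \ge 1$ and every $z \in (0,z_{\max}]$ one has $g_n'(z) \ge \alpha_2 \, \frac{n}{\Sigma_n(z)}\, g_n(z)$. Then there exists $\tilde{z} \in [0, z_{\max}]$ such that: (i) for every $z \in (0,z_{\max}]$ with $z < \tilde{z}$ there exists a constant $\alpha_1 > 0$ (depending on $z$) with $g_n(z) \le \exp(-\alpha_1 n)$ for all $n \ge 0$; and (ii) for every $z \in (0,z_{\max}]$ with $z > \tilde{z}$, the limit $g(z) := \lim_{n \to \infty} g_n(z)$ satisfies $g(z) \ge \alpha_2 (z - \tilde{z})$. -/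
/-!
Write `Σ_n(z) = ∑_{i<n} g_i(z)`. Call `z` *supercritical* if for every `a < 1` one has
`n ^ a ≤ Σ_n(z)` for infinitely many `n`, and let the threshold be the infimum of the
supercritical points (with `zmax` adjoined, so that the set is nonempty).

Below the threshold: since `(log g_n)' ≥ α₂ n / Σ_n` and `Σ_n` is increasing in `z`, integration
gives `g_n(x) ≤ exp (-α₂ (y - x) n / Σ_n(y))` for `x ≤ y` (`le_exp_of_diff_ineq`). At a point which
is not supercritical, `Σ_n ≤ n ^ a` eventually for some `a < 1`, so slightly to the left `g_n` decays
like `exp (-c n ^ (1 - a))` and `Σ_n` is bounded; further to the left the same inequality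
gives exponential decay.

Above the threshold: the harmonic sums `H_n = ∑_{1 ≤ i ≤ n} g_i / i` satisfy
`H_n' ≥ α₂ ∑ g_i / Σ_i ≥ α₂ log Σ_{n+1}`, because `log` telescopes and `g_i / Σ_i ≥ log (Σ_{i+1} / Σ_i)`.
Hence `H_n(z) ≥ α₂ (z - w) log Σ_{n+1}(w)`, which for supercritical `w` is at least
`a α₂ (z - w) log (n + 1)` infinitely often for each `a < 1`. On the other hand
`H_n(z) ≤ (L + o(1)) log n` if `g_n(z) → L`. Comparing, `L ≥ α₂ (z - w)`.
-/

open Filter Real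

/-- Mean value inequality for derivatives within `(0, Z]`. -/
lemma mul_sub_le_of_le_derivWithin {Z x y C : ℝ} {f f' : ℝ → ℝ}
    (hf : ∀ z ∈ Set.Ioc 0 Z, HasDerivWithinAt f (f' z) (Set.Ioc 0 Z) z)
    (hx : 0 < x) (hxy : x ≤ y) (hy : y ≤ Z)
    (hC : ∀ z ∈ Set.Icc x y, C ≤ f' z) : C * (y - x) ≤ f y - f x := by
  have hsub : Set.Icc x y ⊆ Set.Ioc 0 Z := fun z hz => ⟨hx.trans_le hz.1, hz.2.trans hy⟩
  have hder : ∀ z ∈ interior (Set.Icc x y), HasDerivAt f (f' z) z := by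
    intro z hz
    exact ((hf z (hsub (interior_subset hz))).mono hsub).hasDerivAt (mem_interior_iff_mem_nhds.1 hz)
  refine (convex_Icc x y).mul_sub_le_image_sub_of_le_deriv
    (fun z hz => ((hf z (hsub hz)).mono hsub).continuousWithinAt)
    (fun z hz => (hder z hz).differentiableAt.differentiableWithinAt)
    (fun z hz => ?_) x ⟨le_rfl, hxy⟩ y ⟨hxy, le_rfl⟩ hxy
  rw [(hder z hz).deriv]
  exact hC z (interior_subset hz)

/-- Integrated form of `(log g_n)' ≥ α₂ n / Σ_n`. -/
lemma le_exp_of_diff_ineq {Z α : ℝ} (hα : 0 < α) {g g' : ℕ → ℝ → ℝ}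
    (hrange : ∀ n, ∀ z ∈ Set.Ioc 0 Z, g n z ∈ Set.Ioc (0 : ℝ) 1)
    (hmono : ∀ n, MonotoneOn (g n) (Set.Ioc 0 Z))
    (hdiff : ∀ n, ∀ z ∈ Set.Ioc 0 Z, HasDerivWithinAt (g n) (g' n z) (Set.Ioc 0 Z) z)
    (hineq : ∀ n : ℕ, 1 ≤ n → ∀ z ∈ Set.Ioc 0 Z,
      α * (n / (∑ i ∈ Finset.range n, g i z)) * g n z ≤ g' n z)
    {x y : ℝ} (hx : 0 < x) (hxy : x ≤ y) (hy : y ≤ Z) {n : ℕ} (hn : 1 ≤ n) :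
    g n x ≤ Real.exp (-(α * (n / (∑ i ∈ Finset.range n, g i y)) * (y - x))) := by
  have hxm : x ∈ Set.Ioc 0 Z := ⟨hx, hxy.trans hy⟩
  have hym : y ∈ Set.Ioc 0 Z := ⟨hx.trans_le hxy, hy⟩
  have key := mul_sub_le_of_le_derivWithin (f := fun z => Real.log (g n z))
    (f' := fun z => g' n z / g n z) (C := α * (n / (∑ i ∈ Finset.range n, g i y)))
    (fun z hz => (hdiff n z hz).log (hrange n z hz).1.ne') hx hxy hy ?_
  · have h1 := Real.log_nonpos (hrange n y hym).1.le (hrange n y hym).2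
    rw [← Real.log_le_iff_le_exp (hrange n x hxm).1]
    linarith
  · intro z hz
    have hzm : z ∈ Set.Ioc 0 Z := ⟨hx.trans_le hz.1, hz.2.trans hy⟩
    rw [le_div_iff₀ (hrange n z hzm).1]
    refine le_trans ?_ (hineq n hn z hzm)
    have hpos : 0 < ∑ i ∈ Finset.range n, g i z :=
      Finset.sum_pos (fun i _ => (hrange i z hzm).1) ⟨0, Finset.mem_range.2 hn⟩
    have hle : ∑ i ∈ Finset.range n, g i z ≤ ∑ i ∈ Finset.range n, g i y :=
      Finset.sum_le_sum (fun i _ => hmono i hzm hym hz.2)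
    have := (hrange n z hzm).1
    gcongr

lemma summable_exp_neg_mul_rpow {c p : ℝ} (hc : 0 < c) (hp : 0 < p) :
    Summable (fun n : ℕ => Real.exp (-c * (n : ℝ) ^ p)) := by
  have h := (isLittleO_exp_neg_mul_rpow_atTop hc (-2 / p)).comp_tendsto
    ((tendsto_rpow_atTop hp).comp tendsto_natCast_atTop_atTop)
  refine summable_of_isBigO_nat (g := fun n : ℕ => (n : ℝ) ^ (-2 : ℝ))
    (Real.summable_nat_rpow.2 (by norm_num)) ?_
  refine h.isBigO.congr (fun n => rfl) (fun n => ?_)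
  simp only [Function.comp_apply]
  rw [← Real.rpow_mul (Nat.cast_nonneg n), mul_div_cancel₀ _ hp.ne']

/-- Exponential decay strictly to the left of a point where `Σ_n` eventually grows slower than
`n ^ a` for some `a < 1`. -/
lemma exp_decay_of_sum_lt_rpow {Z α : ℝ} (hα : 0 < α) {g g' : ℕ → ℝ → ℝ}
    (hrange : ∀ n, ∀ z ∈ Set.Ioc 0 Z, g n z ∈ Set.Ioc (0 : ℝ) 1)
    (hmono : ∀ n, MonotoneOn (g n) (Set.Ioc 0 Z))
    (hdiff : ∀ n, ∀ z ∈ Set.Ioc 0 Z, HasDerivWithinAt (g n) (g' n z) (Set.Ioc 0 Z) z)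
    (hineq : ∀ n : ℕ, 1 ≤ n → ∀ z ∈ Set.Ioc 0 Z,
      α * (n / (∑ i ∈ Finset.range n, g i z)) * g n z ≤ g' n z)
    {x y a : ℝ} (hx : 0 < x) (hxy : x < y) (hy : y ≤ Z) (ha : a < 1)
    (hsum : ∀ᶠ n : ℕ in atTop, ∑ i ∈ Finset.range n, g i y < (n : ℝ) ^ a) :
    ∃ α₁ > (0 : ℝ), ∀ n : ℕ, g n x ≤ Real.exp (-α₁ * n) := by
  obtain ⟨w, hxw, hwy⟩ := exists_between hxy
  have hxm : x ∈ Set.Ioc 0 Z := ⟨hx, hxy.le.trans hy⟩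
  have hym : y ∈ Set.Ioc 0 Z := ⟨hx.trans hxy, hy⟩
  have hwm : w ∈ Set.Ioc 0 Z := ⟨hx.trans hxw, hwy.le.trans hy⟩
  -- stretched-exponential decay at the intermediate point `w`, hence summability there
  have hsummable : Summable (fun n => g n w) := by
    refine summable_of_isBigO_nat
      (summable_exp_neg_mul_rpow (mul_pos hα (sub_pos.2 hwy)) (sub_pos.2 ha)) ?_
    refine Asymptotics.IsBigO.of_bound 1 ?_
    filter_upwards [hsum, eventually_ge_atTop 1] with n hn hn1
    have hn0 : (0 : ℝ) < n := by exact_mod_cast hn1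
    have hpos : 0 < ∑ i ∈ Finset.range n, g i y :=
      Finset.sum_pos (fun i _ => (hrange i y hym).1) ⟨0, Finset.mem_range.2 hn1⟩
    rw [Real.norm_of_nonneg (hrange n w hwm).1.le, Real.norm_of_nonneg (Real.exp_pos _).le, one_mul]
    refine (le_exp_of_diff_ineq hα hrange hmono hdiff hineq hwm.1 hwy.le hy hn1).trans ?_
    apply Real.exp_le_exp.2
    have h1 : (n : ℝ) ^ (1 - a) ≤ n / (∑ i ∈ Finset.range n, g i y) := by
      rw [Real.rpow_sub hn0, Real.rpow_one]
      gcongr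
    have h2 := mul_le_mul_of_nonneg_left h1 (mul_pos hα (sub_pos.2 hwy)).le
    linarith
  have hM : 0 < ∑' n, g n w := hsummable.tsum_pos (fun n => (hrange n w hwm).1.le) 0 (hrange 0 w hwm).1
  refine ⟨α * (w - x) / ∑' n, g n w, div_pos (mul_pos hα (sub_pos.2 hxw)) hM, fun n => ?_⟩
  rcases Nat.eq_zero_or_pos n with rfl | hn
  · simpa using (hrange 0 x hxm).2
  · refine (le_exp_of_diff_ineq hα hrange hmono hdiff hineq hx hxw.le hwm.2 hn).trans ?_
    apply Real.exp_le_exp.2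
    have hpos : 0 < ∑ i ∈ Finset.range n, g i w :=
      Finset.sum_pos (fun i _ => (hrange i w hwm).1) ⟨0, Finset.mem_range.2 hn⟩
    have hle : ∑ i ∈ Finset.range n, g i w ≤ ∑' n, g n w :=
      hsummable.sum_le_tsum _ (fun i _ => (hrange i w hwm).1.le)
    have h1 : (n : ℝ) / ∑' n, g n w ≤ n / (∑ i ∈ Finset.range n, g i w) := by gcongr
    have h2 := mul_le_mul_of_nonneg_left h1 (mul_pos hα (sub_pos.2 hxw)).le
    have h3 : -(α * (w - x) / ∑' n, g n w) * (n : ℝ) = -(α * (w - x) * (n / ∑' n, g n w)) := by ring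
    rw [h3]
    linarith

/-- Telescoping `log (Σ_{i+1} / Σ_i) ≤ u_i / Σ_i` with `Σ_n = ∑_{i<n} u_i`; the term `log Σ_1 = log u_0 ≤ 0` is dropped. -/
lemma log_sum_le_sum_div {u : ℕ → ℝ} (hu : ∀ n, u n ∈ Set.Ioc (0 : ℝ) 1) (n : ℕ) :
    Real.log (∑ i ∈ Finset.range (n + 1), u i) ≤
      ∑ k ∈ Finset.range n, u (k + 1) / ∑ i ∈ Finset.range (k + 1), u i := by
  induction n with
  | zero => simpa using Real.log_nonpos (hu 0).1.le (hu 0).2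
  | succ n ih =>
    rw [Finset.sum_range_succ (fun k => u (k + 1) / ∑ i ∈ Finset.range (k + 1), u i)]
    have hS : 0 < ∑ i ∈ Finset.range (n + 1), u i :=
      Finset.sum_pos (fun i _ => (hu i).1) ⟨0, by simp⟩
    rw [Finset.sum_range_succ u (n + 1)]
    set S := ∑ i ∈ Finset.range (n + 1), u i
    have hS' : 0 < S + u (n + 1) := add_pos hS (hu _).1
    have h := Real.log_le_sub_one_of_pos (div_pos hS' hS)
    rw [Real.log_div hS'.ne' hS.ne', add_div, div_self hS.ne'] at h
    linarith

/-- Integrated lower bound for the harmonic sums `∑_{1 ≤ i ≤ n} g_i / i`. -/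
lemma mul_log_sum_le_harmonic_sum {Z α : ℝ} (hα : 0 < α) {g g' : ℕ → ℝ → ℝ}
    (hrange : ∀ n, ∀ z ∈ Set.Ioc 0 Z, g n z ∈ Set.Ioc (0 : ℝ) 1)
    (hmono : ∀ n, MonotoneOn (g n) (Set.Ioc 0 Z))
    (hdiff : ∀ n, ∀ z ∈ Set.Ioc 0 Z, HasDerivWithinAt (g n) (g' n z) (Set.Ioc 0 Z) z)
    (hineq : ∀ n : ℕ, 1 ≤ n → ∀ z ∈ Set.Ioc 0 Z,
      α * (n / (∑ i ∈ Finset.range n, g i z)) * g n z ≤ g' n z)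
    {x y : ℝ} (hx : 0 < x) (hxy : x ≤ y) (hy : y ≤ Z) (n : ℕ) :
    α * Real.log (∑ i ∈ Finset.range (n + 1), g i x) * (y - x) ≤
      ∑ k ∈ Finset.range n, g (k + 1) y / ((k : ℝ) + 1) := by
  have hxm : x ∈ Set.Ioc 0 Z := ⟨hx, hxy.trans hy⟩
  have key := mul_sub_le_of_le_derivWithin
    (f := fun z => ∑ k ∈ Finset.range n, g (k + 1) z / ((k : ℝ) + 1))
    (f' := fun z => ∑ k ∈ Finset.range n, g' (k + 1) z / ((k : ℝ) + 1))
    (C := α * Real.log (∑ i ∈ Finset.range (n + 1), g i x))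
    (fun z hz => HasDerivWithinAt.fun_sum fun k _ => (hdiff (k + 1) z hz).div_const _) hx hxy hy ?_
  · have h0 : 0 ≤ ∑ k ∈ Finset.range n, g (k + 1) x / ((k : ℝ) + 1) :=
      Finset.sum_nonneg fun k _ => div_nonneg (hrange _ x hxm).1.le (by positivity)
    linarith
  · intro z hz
    have hzm : z ∈ Set.Ioc 0 Z := ⟨hx.trans_le hz.1, hz.2.trans hy⟩
    have hpos : 0 < ∑ i ∈ Finset.range (n + 1), g i x :=
      Finset.sum_pos (fun i _ => (hrange i x hxm).1) ⟨0, by simp⟩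
    have hle : ∑ i ∈ Finset.range (n + 1), g i x ≤ ∑ i ∈ Finset.range (n + 1), g i z :=
      Finset.sum_le_sum (fun i _ => hmono i hxm hzm hz.1)
    have h1 := (Real.log_le_log hpos hle).trans
      (log_sum_le_sum_div (u := fun i => g i z) (fun i => hrange i z hzm) n)
    refine (mul_le_mul_of_nonneg_left h1 hα.le).trans ?_
    rw [Finset.mul_sum]
    refine Finset.sum_le_sum fun k _ => ?_
    have hk : (0 : ℝ) < (k : ℝ) + 1 := by positivity
    rw [le_div_iff₀ hk]
    refine le_trans (le_of_eq ?_) (hineq (k + 1) (by omega) z hzm)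
    push_cast
    ring

/-- If `u`, with values in `(0, 1]`, converges to `L`, its harmonic sums grow at most like `(L + ε) log n`. -/
lemma harmonic_sum_le {u : ℕ → ℝ} (hu : ∀ n, u n ∈ Set.Ioc (0 : ℝ) 1) {L ε : ℝ}
    (hL : Tendsto u atTop (nhds L)) (hε : 0 < ε) :
    ∃ C : ℝ, ∀ n : ℕ, ∑ k ∈ Finset.range n, u (k + 1) / ((k : ℝ) + 1) ≤
      C + (L + ε) * Real.log ((n : ℝ) + 1) := by
  have hL0 : 0 ≤ L := ge_of_tendsto' hL fun n => (hu n).1.le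
  obtain ⟨N, hN⟩ := eventually_atTop.1 (hL.eventually_le_const (lt_add_of_pos_right L hε))
  refine ⟨N + (L + ε), fun n => ?_⟩
  have hterm : ∀ k : ℕ, u (k + 1) / ((k : ℝ) + 1) ≤
      (if k < N then 1 else 0) + (L + ε) * ((k : ℝ) + 1)⁻¹ := by
    intro k
    have hk : (0 : ℝ) < (k : ℝ) + 1 := by positivity
    split_ifs with h
    · have h1 : u (k + 1) / ((k : ℝ) + 1) ≤ 1 := by
        rw [div_le_one hk]
        have := (hu (k + 1)).2
        have : (0 : ℝ) ≤ k := by positivity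
        linarith
      have h2 : 0 ≤ (L + ε) * ((k : ℝ) + 1)⁻¹ := by positivity
      linarith
    · rw [zero_add, div_eq_mul_inv]
      have := hN (k + 1) (by omega)
      gcongr
  have hsum := Finset.sum_le_sum (s := Finset.range n) fun k _ => hterm k
  rw [Finset.sum_add_distrib, ← Finset.mul_sum] at hsum
  have hcard : ∑ k ∈ Finset.range n, (if k < N then (1 : ℝ) else 0) ≤ N := by
    rw [Finset.sum_boole]
    have : (Finset.filter (fun k => k < N) (Finset.range n)).card ≤ N := by
      refine (Finset.card_le_card (t := Finset.range N) fun k hk => ?_).trans (by simp)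
      simpa using (Finset.mem_filter.1 hk).2
    exact_mod_cast this
  have hharm : ∑ k ∈ Finset.range n, ((k : ℝ) + 1)⁻¹ ≤ 1 + Real.log ((n : ℝ) + 1) := by
    rcases Nat.eq_zero_or_pos n with rfl | hn
    · simp
    · have h := harmonic_le_one_add_log n
      simp only [harmonic, Rat.cast_sum, Rat.cast_inv, Rat.cast_natCast, Nat.cast_add,
        Nat.cast_one, Rat.cast_add, Rat.cast_one] at h
      have h3 : Real.log n ≤ Real.log ((n : ℝ) + 1) :=
        Real.log_le_log (by exact_mod_cast hn) (by linarith)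
      linarith
  have h4 := mul_le_mul_of_nonneg_left hharm (add_nonneg hL0 hε.le)
  linarith

/-- If `A log n ≤ C + B log n` for infinitely many `n`, then `A ≤ B`. -/
lemma le_of_frequently_mul_log_le {A B C : ℝ}
    (h : ∃ᶠ n : ℕ in atTop, A * Real.log n ≤ C + B * Real.log n) : A ≤ B := by
  by_contra! hlt
  have ht : Tendsto (fun n : ℕ => (A - B) * Real.log n) atTop atTop :=
    (Real.tendsto_log_atTop.comp tendsto_natCast_atTop_atTop).const_mul_atTop (sub_pos.2 hlt)
  obtain ⟨n, h1, h2⟩ := (h.and_eventually (ht.eventually_gt_atTop C)).exists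
  linarith

/-- Lower bound on the limit to the right of a supercritical point `x`. -/
lemma mul_sub_le_limit {Z α : ℝ} (hα : 0 < α) {g g' : ℕ → ℝ → ℝ}
    (hrange : ∀ n, ∀ z ∈ Set.Ioc 0 Z, g n z ∈ Set.Ioc (0 : ℝ) 1)
    (hmono : ∀ n, MonotoneOn (g n) (Set.Ioc 0 Z))
    (hdiff : ∀ n, ∀ z ∈ Set.Ioc 0 Z, HasDerivWithinAt (g n) (g' n z) (Set.Ioc 0 Z) z)
    (hineq : ∀ n : ℕ, 1 ≤ n → ∀ z ∈ Set.Ioc 0 Z,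
      α * (n / (∑ i ∈ Finset.range n, g i z)) * g n z ≤ g' n z)
    {x y L : ℝ} (hx : 0 < x) (hxy : x ≤ y) (hy : y ≤ Z)
    (hsup : ∀ a < (1 : ℝ), ∃ᶠ n : ℕ in atTop, (n : ℝ) ^ a ≤ ∑ i ∈ Finset.range n, g i x)
    (hL : Tendsto (fun n => g n y) atTop (nhds L)) : α * (y - x) ≤ L := by
  have hym : y ∈ Set.Ioc 0 Z := ⟨hx.trans_le hxy, hy⟩
  have hK : 0 ≤ α * (y - x) := mul_nonneg hα.le (sub_nonneg.2 hxy)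
  have main : ∀ a < (1 : ℝ), ∀ ε > (0 : ℝ), α * (y - x) * a ≤ L + ε := by
    intro a ha ε hε
    obtain ⟨C, hC⟩ := harmonic_sum_le (fun n => hrange n y hym) hL hε
    refine le_of_frequently_mul_log_le (C := C) ?_
    refine ((hsup a ha).and_eventually (eventually_ge_atTop 1)).mono ?_
    rintro n ⟨hn, hn1⟩
    obtain ⟨m, rfl⟩ : ∃ m, n = m + 1 := ⟨n - 1, by omega⟩
    have hm : (0 : ℝ) < ((m + 1 : ℕ) : ℝ) := by positivity
    have h1 := Real.log_le_log (Real.rpow_pos_of_pos hm a) hn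
    rw [Real.log_rpow hm] at h1
    have h2 := mul_log_sum_le_harmonic_sum hα hrange hmono hdiff hineq hx hxy hy m
    have h3 := hC m
    have h4 := mul_le_mul_of_nonneg_left h1 hK
    push_cast at h4 ⊢
    linarith
  have h1 : α * (y - x) * 1 ≤ L := by
    refine le_of_forall_pos_le_add fun ε hε => ?_
    refine le_of_tendsto (f := fun a : ℝ => α * (y - x) * a) (x := nhdsWithin 1 (Set.Iio 1)) ?_ ?_
    · exact ((continuous_const.mul continuous_id).tendsto 1).mono_left nhdsWithin_le_nhds
    · filter_upwards [self_mem_nhdsWithin] with a ha using main a ha ε hε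
  linarith

/-- Differential-inequality lemma (Lemma 5.3): a sequence of increasing differentiable
functions `g n : (0, zmax] → (0,1]` satisfying `g_n'(z) ≥ α₂ n g_n(z) / Σ_n(z)` with
`Σ_n(z) = ∑_{i<n} g_i(z)` admits a threshold `z̃ ∈ [0, zmax]` with exponential decay
below it and a linear lower bound on the limit above it. -/
theorem sharp_threshold_from_differential_inequality
    (zmax α₂ : ℝ) (hzmax : 0 < zmax) (hα₂ : 0 < α₂)
    (g g' : ℕ → ℝ → ℝ)
    (hrange : ∀ n, ∀ z ∈ Set.Ioc 0 zmax, g n z ∈ Set.Ioc (0 : ℝ) 1)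
    (hmono : ∀ n, MonotoneOn (g n) (Set.Ioc 0 zmax))
    (hdiff : ∀ n, ∀ z ∈ Set.Ioc 0 zmax,
      HasDerivWithinAt (g n) (g' n z) (Set.Ioc 0 zmax) z)
    (hconv : ∀ z ∈ Set.Ioc 0 zmax, ∃ L : ℝ, Tendsto (fun n => g n z) atTop (nhds L))
    (hineq : ∀ n : ℕ, 1 ≤ n → ∀ z ∈ Set.Ioc 0 zmax,
      α₂ * (n / (∑ i ∈ Finset.range n, g i z)) * g n z ≤ g' n z) :
    ∃ zt ∈ Set.Icc (0 : ℝ) zmax,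
      (∀ z ∈ Set.Ioc 0 zmax, z < zt →
        ∃ α₁ > (0 : ℝ), ∀ n : ℕ, g n z ≤ Real.exp (-α₁ * n)) ∧
      (∀ z ∈ Set.Ioc 0 zmax, zt < z →
        ∀ L : ℝ, Tendsto (fun n => g n z) atTop (nhds L) → α₂ * (z - zt) ≤ L) := by
  set S : Set ℝ := {x | x ∈ Set.Ioc 0 zmax ∧
    ∀ a < (1 : ℝ), ∃ᶠ n : ℕ in atTop, (n : ℝ) ^ a ≤ ∑ i ∈ Finset.range n, g i x} with hS
  have hlb : ∀ w ∈ insert zmax S, 0 ≤ w := by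
    rintro w (rfl | hw)
    · exact hzmax.le
    · exact hw.1.1.le
  have hbdd : BddBelow (insert zmax S) := ⟨0, hlb⟩
  have hne : (insert zmax S).Nonempty := ⟨zmax, Set.mem_insert _ _⟩
  have hle : sInf (insert zmax S) ≤ zmax := csInf_le hbdd (Set.mem_insert _ _)
  refine ⟨sInf (insert zmax S), ⟨le_csInf hne hlb, hle⟩, ?_, ?_⟩
  · intro z hz hzt
    obtain ⟨y, hzy, hyt⟩ := exists_between hzt
    have hyS : y ∉ S := fun h => (csInf_le hbdd (Set.mem_insert_of_mem _ h)).not_gt hyt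
    have hym : y ∈ Set.Ioc 0 zmax := ⟨hz.1.trans hzy, hyt.le.trans hle⟩
    have hex : ∃ a < (1 : ℝ), ∀ᶠ n : ℕ in atTop, ∑ i ∈ Finset.range n, g i y < (n : ℝ) ^ a := by
      by_contra! hcon
      refine hyS ⟨hym, fun a ha => ?_⟩
      simpa only [not_eventually, not_lt] using hcon a ha
    obtain ⟨a, ha, hev⟩ := hex
    exact exp_decay_of_sum_lt_rpow hα₂ hrange hmono hdiff hineq hz.1 hzy hym.2 ha hev
  · intro z hz hzt L hL
    have hL0 : 0 ≤ L := ge_of_tendsto' hL fun n => (hrange n z hz).1.le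
    by_contra! hlt
    -- a supercritical `w` so close to the infimum that `L < α₂ * (z - w)`
    have h1 : sInf (insert zmax S) < z - L / α₂ := by
      have : L / α₂ < z - sInf (insert zmax S) := by
        rw [div_lt_iff₀ hα₂]
        linarith
      linarith
    obtain ⟨w, hw, hwz⟩ := exists_lt_of_csInf_lt hne h1
    have h2 : 0 ≤ L / α₂ := div_nonneg hL0 hα₂.le
    have hwz' : w < z := by linarith
    rcases hw with rfl | hw
    · exact absurd hz.2 (not_le.2 hwz')
    · have h3 := mul_sub_le_limit hα₂ hrange hmono hdiff hineq hw.1.1 hwz'.le hz.2 hw.2 hL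
      have h4 : L / α₂ < z - w := by linarith
      rw [div_lt_iff₀ hα₂] at h4
      linarith
end

section
/- Let $d \ge 1$, let $v_d$ denote the Lebesgue measure of the closed unit ball in $\mathbb{R}^d$, let $M > 1$, and set $c = \min\left(1, \frac{e^{-(M+1) v_d}}{v_d\, M}\right)$. Then $c > 0$, and for every $z, \beta \in [0, M]$, every $u \in [0,1]$, every point $x \in \mathbb{R}^d$, and all countable subsets $s \subseteq s' \subseteq \mathbb{R}^d$, the following two inequalities hold: (i) $\gamma_{z,\beta}(x, s') \ge \gamma_{z,\beta+u}(x, s)$, i.e. $z\, \exp\big(-\beta\, \lambda\big(B_1(x) \setminus B_1(s')\big)\big) \ge z\, \exp\big(-(\beta+u)\, \lambda\big(B_1(x) \setminus B_1(s)\big)\big)$; and (ii) $\gamma_{z+u,\beta+cu}(x, s') \ge \gamma_{z,\beta}(x, s)$, i.e. $(z+u)\, \exp\big(-(\beta+cu)\, \lambda\big(B_1(x) \setminus B_1(s')\big)\big) \ge z\, \exp\big(-\beta\, \lambda\big(B_1(x) \setminus B_1(s)\big)\big)$. -/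
/-!
Write `A' ≤ A ≤ v_d` for the volumes of `B₁(x) \ B₁(s')` and `B₁(x) \ B₁(s)`. Inequality (i) is
`β A' ≤ (β + u) A`. For (ii), `exp (-β A') ≥ exp (-β A)` reduces the claim to
`(z + u) exp (-t) ≥ z` with `t = c u A'`. Here `z (1 - exp (-t)) ≤ z t ≤ M c u v_d`, which is at
most `u exp (-(M + 1) v_d)` by the choice of `c`, whereas `u exp (-t) ≥ u exp (-v_d)` because
`c, u ≤ 1`. The lemma `activity_compensates` carries out this estimate.
-/

open MeasureTheory Real

/-- An increase `u` of the activity outweighs the factor `exp (-c u a)` lost by raising the inverse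
temperature by `c u`, where `a` stands for the volume of the uncovered part of the ball. -/
lemma activity_compensates {M v c z u a : ℝ} (hM : 0 ≤ M) (hv : 0 ≤ v)
    (hc0 : 0 ≤ c) (hc1 : c ≤ 1) (hcM : c * (v * M) ≤ exp (-(M + 1) * v))
    (hz0 : 0 ≤ z) (hzM : z ≤ M) (hu0 : 0 ≤ u) (hu1 : u ≤ 1) (ha0 : 0 ≤ a) (hav : a ≤ v) :
    z ≤ (z + u) * exp (-(c * u * a)) := by
  have hlin : 1 - c * u * a ≤ exp (-(c * u * a)) := one_sub_le_exp_neg _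
  have hcu : c * u ≤ 1 := mul_le_one₀ hc1 hu0 hu1
  have hta : c * u * a ≤ v := by
    calc c * u * a ≤ 1 * v := by gcongr
      _ = v := one_mul v
  have hexp : exp (-(M + 1) * v) ≤ exp (-(c * u * a)) := by
    apply exp_le_exp.mpr
    nlinarith [mul_nonneg hM hv]
  have hzt : z * (c * u * a) ≤ u * exp (-(c * u * a)) := by
    calc z * (c * u * a) ≤ M * (c * u * v) := by gcongr
      _ = u * (c * (v * M)) := by ring
      _ ≤ u * exp (-(c * u * a)) := by gcongr; exact hcM.trans hexp
  nlinarith [mul_le_mul_of_nonneg_left hlin hz0]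

/-- Monotonicity inequalities for the Papangelou intensity
`γ_{z,β}(x, s) = z exp(-β λ(B₁(x) \ B₁(s)))` of the area-interaction model
(Section 4.4.2 of the paper): with `c = min(1, e^{-(M+1)v_d}/(v_d M))` one has `c > 0`,
and for `z, β ∈ [0,M]`, `u ∈ [0,1]`, `x ∈ ℝ^d` and countable `s ⊆ s'`,
`γ_{z,β}(x,s') ≥ γ_{z,β+u}(x,s)` and `γ_{z+u,β+cu}(x,s') ≥ γ_{z,β}(x,s)`. -/
theorem papangelou_intensity_monotonicity
    (d : ℕ) (hd : 1 ≤ d) (M : ℝ) (hM : 1 < M)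
    (vd : ℝ)
    (hvd : vd = (volume (Metric.closedBall (0 : EuclideanSpace ℝ (Fin d)) 1)).toReal)
    (c : ℝ) (hc : c = min 1 (Real.exp (-(M + 1) * vd) / (vd * M))) :
    0 < c ∧
    ∀ z ∈ Set.Icc (0 : ℝ) M, ∀ β ∈ Set.Icc (0 : ℝ) M, ∀ u ∈ Set.Icc (0 : ℝ) 1,
      ∀ x : EuclideanSpace ℝ (Fin d), ∀ s s' : Set (EuclideanSpace ℝ (Fin d)),
        s.Countable → s'.Countable → s ⊆ s' →
        (z * Real.exp (-β *
            (volume (Metric.closedBall x 1 \ ⋃ y ∈ s', Metric.closedBall y 1)).toReal) ≥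
          z * Real.exp (-(β + u) *
            (volume (Metric.closedBall x 1 \ ⋃ y ∈ s, Metric.closedBall y 1)).toReal)) ∧
        ((z + u) * Real.exp (-(β + c * u) *
            (volume (Metric.closedBall x 1 \ ⋃ y ∈ s', Metric.closedBall y 1)).toReal) ≥
          z * Real.exp (-β *
            (volume (Metric.closedBall x 1 \ ⋃ y ∈ s, Metric.closedBall y 1)).toReal)) := by
  have hv : 0 < vd := by
    rw [hvd]
    exact ENNReal.toReal_pos (Metric.measure_closedBall_pos _ _ one_pos).ne'
      measure_closedBall_lt_top.ne
  have hM0 : 0 < M := by linarith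
  have hc0 : 0 < c := by
    rw [hc]
    positivity
  have hc1 : c ≤ 1 := hc ▸ min_le_left _ _
  have hcM : c * (vd * M) ≤ exp (-(M + 1) * vd) :=
    (le_div_iff₀ (by positivity)).mp (hc ▸ min_le_right _ _)
  refine ⟨hc0, ?_⟩
  rintro z ⟨hz0, hzM⟩ β ⟨hβ0, -⟩ u ⟨hu0, hu1⟩ x s s' - - hss
  have hfin (t : Set (EuclideanSpace ℝ (Fin d))) :
      volume (Metric.closedBall x 1 \ t) ≠ ⊤ :=
    measure_ne_top_of_subset Set.sdiff_subset measure_closedBall_lt_top.ne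
  have hA : (volume (Metric.closedBall x 1 \ ⋃ y ∈ s', Metric.closedBall y 1)).toReal ≤
      (volume (Metric.closedBall x 1 \ ⋃ y ∈ s, Metric.closedBall y 1)).toReal :=
    ENNReal.toReal_mono (hfin _)
      (measure_mono (Set.sdiff_subset_sdiff_right (Set.biUnion_subset_biUnion_left hss)))
  have hAv : (volume (Metric.closedBall x 1 \ ⋃ y ∈ s', Metric.closedBall y 1)).toReal ≤ vd := by
    rw [hvd, ← Measure.addHaar_closedBall_center volume x 1]
    exact ENNReal.toReal_mono measure_closedBall_lt_top.ne (measure_mono Set.sdiff_subset)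
  have hA0 : 0 ≤ (volume (Metric.closedBall x 1 \ ⋃ y ∈ s', Metric.closedBall y 1)).toReal :=
    ENNReal.toReal_nonneg
  generalize (volume (Metric.closedBall x 1 \ ⋃ y ∈ s', Metric.closedBall y 1)).toReal = A'
    at hA hAv hA0 ⊢
  generalize (volume (Metric.closedBall x 1 \ ⋃ y ∈ s, Metric.closedBall y 1)).toReal = A at hA ⊢
  have hβA : β * A' ≤ β * A := mul_le_mul_of_nonneg_left hA hβ0
  constructor
  · refine mul_le_mul_of_nonneg_left (exp_le_exp.mpr ?_) hz0
    nlinarith [mul_nonneg hu0 (hA0.trans hA)]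
  · calc z * exp (-β * A)
        ≤ ((z + u) * exp (-(c * u * A'))) * exp (-β * A') := by
          gcongr ?_ * exp ?_
          · exact activity_compensates hM0.le hv.le hc0.le hc1 hcM hz0 hzM hu0 hu1 hA0 hAv
          · linarith
      _ = (z + u) * exp (-(β + c * u) * A') := by
          rw [mul_assoc, ← exp_add]
          ring_nf
end
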